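/- arXiv:2506.18473 — 3 statements merged into one kernel-verified Lean document; each statement's English description precedes it below -/
import Mathlib

section
/- Let ABCDE be a strictly convex equilateral pentagon in the Euclidean plane with interior angles α, β, γ, δ, ε at A, B, C, D, E respectively. If 2α + β = 2π and 2δ + γ = 2π (pentagon type 8 conditions), then α = δ and β = γ; that is, the pentagon is mirror symmetric. -/
/-!
Put `u = C - B` and let `R θ` be the rotation by `θ`. Walking from `B` to `E` through `A` and
through `C`, `D` expresses all sides as rotated copies of `u`, and with `β = 2π - 2α`,
`γ = 2π - 2δ` the closing condition becomes
`1 - R (2δ) + R δ - R (-2α) + R (-α) = 0` (applied to `u ≠ 0`), i.e.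

* `1 + cos δ - cos 2δ + cos α - cos 2α = 0`,
* `sin δ - sin 2δ = sin α - sin 2α`.

With `s = (α + δ) / 2` and `t = (α - δ) / 2` the second equation factors as
`sin t * (2 cos 2s cos t - cos s) = 0`. If the second factor vanishes, substituting
`cos s = 2 cos 2s cos t` in the first one gives `1 + 2 cos 2s = 0`, whence `cos² s = 1/4` and
`cos² t = 1/4`. But `α, δ ∈ (π/2, π]` forces `|t| < π/4`, so `cos² t > 1/2`. Hence `sin t = 0`
and `α = δ`. The geometric input is `rot_of_angle`, the trigonometric part is
`eq_of_closing`, and `ccw_case` combines them; the clockwise case follows by exchanging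
`A ↔ D`, `B ↔ C`.
-/

open EuclideanGeometry

/-- Signed area determinant of two plane vectors. -/
noncomputable def det2 (u v : EuclideanSpace ℝ (Fin 2)) : ℝ :=
  u 0 * v 1 - u 1 * v 0

/-- `R` lies strictly to the left of the directed line from `P` to `Q`. -/
def SLeft (P Q R : EuclideanSpace ℝ (Fin 2)) : Prop :=
  0 < det2 (Q - P) (R - P)

/-- The five points are in strictly convex position, listed in counterclockwise
cyclic order along their convex hull (in particular no three are collinear):
for every directed edge of the pentagon, all remaining vertices lie strictly to its left. -/
def CcwConvex5 (A B C D E : EuclideanSpace ℝ (Fin 2)) : Prop :=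
  SLeft A B C ∧ SLeft A B D ∧ SLeft A B E ∧
  SLeft B C D ∧ SLeft B C E ∧ SLeft B C A ∧
  SLeft C D E ∧ SLeft C D A ∧ SLeft C D B ∧
  SLeft D E A ∧ SLeft D E B ∧ SLeft D E C ∧
  SLeft E A B ∧ SLeft E A C ∧ SLeft E A D

/-- The five points are in strictly convex position, listed in cyclic order
(either orientation) along their convex hull, with no three collinear. -/
def ConvexPos5 (A B C D E : EuclideanSpace ℝ (Fin 2)) : Prop :=
  CcwConvex5 A B C D E ∨ CcwConvex5 E D C B A

/-- The pentagon `ABCDE` is equilateral. -/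
def Equilateral5 (A B C D E : EuclideanSpace ℝ (Fin 2)) : Prop :=
  dist A B = dist B C ∧ dist B C = dist C D ∧ dist C D = dist D E ∧ dist D E = dist E A

/-- If `u`, `v` have equal length and `v` lies to the left of `u`, then `v` is `u` rotated by the
unoriented angle between them. -/
lemma rot_of_angle (u v : EuclideanSpace ℝ (Fin 2)) (h : ‖u‖ = ‖v‖) (hd : 0 < det2 u v) :
    v 0 = Real.cos (InnerProductGeometry.angle u v) * u 0
        - Real.sin (InnerProductGeometry.angle u v) * u 1 ∧
    v 1 = Real.sin (InnerProductGeometry.angle u v) * u 0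
        + Real.cos (InnerProductGeometry.angle u v) * u 1 := by
  have hc := InnerProductGeometry.cos_angle_mul_norm_mul_norm u v
  have hs0 := InnerProductGeometry.sin_angle_nonneg u v
  have hcs := Real.sin_sq_add_cos_sq (InnerProductGeometry.angle u v)
  have hu : ‖u‖ ^ 2 = u 0 ^ 2 + u 1 ^ 2 := by
    simp [EuclideanSpace.norm_sq_eq, Fin.sum_univ_two]
  have hv : ‖v‖ ^ 2 = v 0 ^ 2 + v 1 ^ 2 := by
    simp [EuclideanSpace.norm_sq_eq, Fin.sum_univ_two]
  have hi : inner ℝ u v = u 0 * v 0 + u 1 * v 1 := by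
    simp [PiLp.inner_apply, Fin.sum_univ_two]; ring
  rw [hi, ← h, ← pow_two, hu] at hc
  rw [← h, hu] at hv
  unfold det2 at hd
  generalize Real.cos (InnerProductGeometry.angle u v) = c at *
  generalize Real.sin (InnerProductGeometry.angle u v) = s at *
  generalize u 0 = a at *
  generalize u 1 = b at *
  generalize v 0 = p at *
  generalize v 1 = q at *
  have hr : 0 < a ^ 2 + b ^ 2 := by
    rcases eq_or_ne a 0 with ha | ha
    · rcases eq_or_ne b 0 with hb | hb
      · simp [ha, hb] at hd
      · positivity
    · positivity
  -- Lagrange's identity: the inner product and the determinant have square sum `‖u‖⁴`.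
  have hs : s * (a ^ 2 + b ^ 2) = a * q - b * p := by
    have hsq : (s * (a ^ 2 + b ^ 2)) ^ 2 = (a * q - b * p) ^ 2 := by
      linear_combination (a ^ 2 + b ^ 2) ^ 2 * hcs
        - (c * (a ^ 2 + b ^ 2) + (a * p + b * q)) * hc + (a ^ 2 + b ^ 2) * hv
    exact (pow_left_inj₀ (by positivity) hd.le two_ne_zero).1 hsq
  constructor
  · apply mul_right_cancel₀ hr.ne'
    linear_combination -a * hc + b * hs
  · apply mul_right_cancel₀ hr.ne'
    linear_combination -b * hc - a * hs

/-- The closing equations of the pentagon admit only `α = δ` in the range `(π/2, π]`. -/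
lemma eq_of_closing (α δ : ℝ) (hα : Real.pi / 2 < α) (hα' : α ≤ Real.pi)
    (hδ : Real.pi / 2 < δ) (hδ' : δ ≤ Real.pi)
    (hre : 1 + Real.cos δ - Real.cos (2 * δ) + Real.cos α - Real.cos (2 * α) = 0)
    (him : Real.sin δ - Real.sin (2 * δ) = Real.sin α - Real.sin (2 * α)) : α = δ := by
  obtain ⟨s, t, rfl, rfl⟩ : ∃ s t, α = s + t ∧ δ = s - t :=
    ⟨(α + δ) / 2, (α - δ) / 2, by ring, by ring⟩
  have hcos2t : 0 < Real.cos (2 * t) :=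
    Real.cos_pos_of_mem_Ioo ⟨by linarith, by linarith⟩
  have ht : -Real.pi < t ∧ t < Real.pi := by
    constructor <;> linarith [Real.pi_pos]
  rw [Real.cos_two_mul] at hcos2t
  have hs1 := Real.sin_sq_add_cos_sq s
  have ht1 := Real.sin_sq_add_cos_sq t
  have hfac : Real.sin t * (2 * (2 * Real.cos s ^ 2 - 1) * Real.cos t - Real.cos s) = 0 := by
    rw [Real.sin_two_mul, Real.sin_two_mul, Real.sin_add, Real.sin_sub, Real.cos_add,
      Real.cos_sub] at him
    linear_combination (1 / 2) * him + 2 * Real.sin t * Real.cos t * hs1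
  have hre' : 1 + 2 * Real.cos s * Real.cos t
      - 2 * (2 * Real.cos s ^ 2 - 1) * (2 * Real.cos t ^ 2 - 1) = 0 := by
    rw [Real.cos_two_mul, Real.cos_two_mul, Real.cos_add, Real.cos_sub] at hre
    have e : (Real.sin s * Real.sin t) ^ 2 = (1 - Real.cos s ^ 2) * (1 - Real.cos t ^ 2) := by
      rw [show 1 - Real.cos s ^ 2 = Real.sin s ^ 2 by linarith,
        show 1 - Real.cos t ^ 2 = Real.sin t ^ 2 by linarith]; ring
    linear_combination hre + 4 * e
  rcases mul_eq_zero.1 hfac with h | h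
  · have := (Real.sin_eq_zero_iff_of_lt_of_lt ht.1 ht.2).1 h
    rw [this]; ring
  · exfalso
    have hp : Real.cos s ^ 2 = 1 / 4 := by
      linear_combination (1 / 4) * hre' + (1 / 2) * Real.cos t * h
    rw [hp] at h
    have hq : Real.cos t = - Real.cos s := by linear_combination -h
    rw [hq] at hcos2t
    nlinarith

/-- The counterclockwise case, stated with only the orientations that are needed. -/
lemma ccw_case (A B C D E : EuclideanSpace ℝ (Fin 2))
    (hA : SLeft A B E) (hB : SLeft B C A) (hC : SLeft C D B) (hD : SLeft D E C)
    (hequi : Equilateral5 A B C D E)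
    (h1 : 2 * ∠ E A B + ∠ A B C = 2 * Real.pi) (h2 : 2 * ∠ C D E + ∠ B C D = 2 * Real.pi) :
    ∠ E A B = ∠ C D E := by
  obtain ⟨e1, e2, e3, e4⟩ := hequi
  obtain ⟨a0, a1⟩ := rot_of_angle (B - A) (E - A)
    (by rw [← dist_eq_norm, ← dist_eq_norm, dist_comm B A]; linarith) hA
  obtain ⟨b0, b1⟩ := rot_of_angle (C - B) (A - B)
    (by rw [← dist_eq_norm, ← dist_eq_norm, dist_comm C B]; linarith) hB
  obtain ⟨c0, c1⟩ := rot_of_angle (D - C) (B - C)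
    (by rw [← dist_eq_norm, ← dist_eq_norm, dist_comm D C]; linarith) hC
  obtain ⟨d0, d1⟩ := rot_of_angle (E - D) (C - D)
    (by rw [← dist_eq_norm, ← dist_eq_norm, dist_comm E D]; linarith) hD
  have ra : InnerProductGeometry.angle (B - A) (E - A) = ∠ E A B := angle_comm B A E
  have rb : InnerProductGeometry.angle (C - B) (A - B) = 2 * Real.pi - 2 * ∠ E A B := by
    have : InnerProductGeometry.angle (C - B) (A - B) = ∠ A B C := angle_comm C B A
    linarith
  have rc : InnerProductGeometry.angle (D - C) (B - C) = 2 * Real.pi - 2 * ∠ C D E := by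
    have : InnerProductGeometry.angle (D - C) (B - C) = ∠ B C D := angle_comm D C B
    linarith
  have rd : InnerProductGeometry.angle (E - D) (C - D) = ∠ C D E := angle_comm E D C
  -- A nonzero determinant at `B` and `C` excludes straight angles there.
  have lt_pi : ∀ u v : EuclideanSpace ℝ (Fin 2), 0 < det2 u v →
      InnerProductGeometry.angle u v < Real.pi := by
    intro u v h
    refine lt_of_le_of_ne (InnerProductGeometry.angle_le_pi u v) fun hpi => ?_
    obtain ⟨-, r, -, rfl⟩ := InnerProductGeometry.angle_eq_pi_iff.1 hpi
    simp only [det2, PiLp.smul_apply, smul_eq_mul] at h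
    linarith [mul_left_comm (u 0) r (u 1), mul_left_comm (u 1) r (u 0), mul_comm (u 0) (u 1)]
  have lb := lt_pi _ _ hB
  have lc := lt_pi _ _ hC
  have la := angle_le_pi E A B
  have ld := angle_le_pi C D E
  have hr : 0 < (C 0 - B 0) ^ 2 + (C 1 - B 1) ^ 2 := by
    by_contra hcon
    have h0 : C 0 - B 0 = 0 := pow_eq_zero_iff two_ne_zero |>.1
      (by linarith [sq_nonneg (C 0 - B 0), sq_nonneg (C 1 - B 1)])
    have h1 : C 1 - B 1 = 0 := pow_eq_zero_iff two_ne_zero |>.1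
      (by linarith [sq_nonneg (C 0 - B 0), sq_nonneg (C 1 - B 1)])
    simp [SLeft, det2, h0, h1] at hB
  rw [rb] at lb b0 b1
  rw [rc] at lc c0 c1
  rw [ra] at a0 a1
  rw [rd] at d0 d1
  generalize ∠ E A B = α at *
  generalize ∠ C D E = δ at *
  rw [Real.cos_two_pi_sub, Real.sin_two_pi_sub] at b0 b1 c0 c1
  simp only [PiLp.sub_apply] at a0 a1 b0 b1 c0 c1 d0 d1
  -- Inverting the rotations at `C` and `D` expresses `D - C` and `E - D` through `C - B`.
  have hsα := Real.sin_sq_add_cos_sq α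
  have hsδ := Real.sin_sq_add_cos_sq δ
  have hs2δ := Real.sin_sq_add_cos_sq (2 * δ)
  have c0' : D 0 - C 0 = -(Real.cos (2 * δ) * (C 0 - B 0) - Real.sin (2 * δ) * (C 1 - B 1)) := by
    linear_combination -Real.cos (2 * δ) * c0 + Real.sin (2 * δ) * c1 - (D 0 - C 0) * hs2δ
  have c1' : D 1 - C 1 = -(Real.sin (2 * δ) * (C 0 - B 0) + Real.cos (2 * δ) * (C 1 - B 1)) := by
    linear_combination -Real.sin (2 * δ) * c0 - Real.cos (2 * δ) * c1 - (D 1 - C 1) * hs2δ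
  have d0' : E 0 - D 0 = -(Real.cos δ * (D 0 - C 0) + Real.sin δ * (D 1 - C 1)) := by
    linear_combination -Real.cos δ * d0 - Real.sin δ * d1 - (E 0 - D 0) * hsδ
  have d1' : E 1 - D 1 = -(-Real.sin δ * (D 0 - C 0) + Real.cos δ * (D 1 - C 1)) := by
    linear_combination Real.sin δ * d0 - Real.cos δ * d1 - (E 1 - D 1) * hsδ
  have kδc : Real.cos δ = Real.cos (2 * δ) * Real.cos δ + Real.sin (2 * δ) * Real.sin δ := by
    rw [← Real.cos_sub]; ring_nf
  have kδs : Real.sin δ = Real.sin (2 * δ) * Real.cos δ - Real.cos (2 * δ) * Real.sin δ := by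
    rw [← Real.sin_sub]; ring_nf
  have kαc : Real.cos α = Real.cos (2 * α) * Real.cos α + Real.sin (2 * α) * Real.sin α := by
    rw [← Real.cos_sub]; ring_nf
  have kαs : Real.sin α = Real.sin (2 * α) * Real.cos α - Real.cos (2 * α) * Real.sin α := by
    rw [← Real.sin_sub]; ring_nf
  have d0'' : E 0 - D 0 = Real.cos δ * (C 0 - B 0) - Real.sin δ * (C 1 - B 1) := by
    linear_combination d0' - Real.cos δ * c0' - Real.sin δ * c1'
      - (C 0 - B 0) * kδc + (C 1 - B 1) * kδs
  have d1'' : E 1 - D 1 = Real.sin δ * (C 0 - B 0) + Real.cos δ * (C 1 - B 1) := by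
    linear_combination d1' + Real.sin δ * c0' - Real.cos δ * c1'
      - (C 0 - B 0) * kδs - (C 1 - B 1) * kδc
  have a0'' : E 0 - A 0 = -(Real.cos α * (C 0 - B 0) + Real.sin α * (C 1 - B 1)) := by
    linear_combination a0 - Real.cos α * b0 + Real.sin α * b1
      + (C 0 - B 0) * kαc + (C 1 - B 1) * kαs
  have a1'' : E 1 - A 1 = -(-Real.sin α * (C 0 - B 0) + Real.cos α * (C 1 - B 1)) := by
    linear_combination a1 - Real.sin α * b0 - Real.cos α * b1
      - (C 0 - B 0) * kαs + (C 1 - B 1) * kαc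
  set P := 1 + Real.cos δ - Real.cos (2 * δ) + Real.cos α - Real.cos (2 * α) with hP
  set Q := Real.sin δ - Real.sin (2 * δ) - (Real.sin α - Real.sin (2 * α)) with hQ
  have q0 : P * (C 0 - B 0) - Q * (C 1 - B 1) = 0 := by
    rw [hP, hQ]; linear_combination a0'' + b0 - c0' - d0''
  have q1 : Q * (C 0 - B 0) + P * (C 1 - B 1) = 0 := by
    rw [hP, hQ]; linear_combination a1'' + b1 - c1' - d1''
  have hP0 : P = 0 := by
    apply (mul_eq_zero.1 (?_ : P * ((C 0 - B 0) ^ 2 + (C 1 - B 1) ^ 2) = 0)).resolve_right hr.ne'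
    linear_combination (C 0 - B 0) * q0 + (C 1 - B 1) * q1
  have hQ0 : Q = 0 := by
    apply (mul_eq_zero.1 (?_ : Q * ((C 0 - B 0) ^ 2 + (C 1 - B 1) ^ 2) = 0)).resolve_right hr.ne'
    linear_combination (C 0 - B 0) * q1 - (C 1 - B 1) * q0
  exact eq_of_closing α δ (by linarith) la (by linarith) ld (by rw [← hP]; exact hP0)
    (by linarith)

theorem type8_mirror_symmetric
    (A B C D E : EuclideanSpace ℝ (Fin 2)) (α β γ δ ε : ℝ)
    (hconv : ConvexPos5 A B C D E) (hequi : Equilateral5 A B C D E)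
    (hα : α = ∠ E A B) (hβ : β = ∠ A B C) (hγ : γ = ∠ B C D)
    (hδ : δ = ∠ C D E) (hε : ε = ∠ D E A)
    (h1 : 2 * α + β = 2 * Real.pi) (h2 : 2 * δ + γ = 2 * Real.pi) :
    α = δ ∧ β = γ := by
  suffices h : α = δ from ⟨h, by linarith⟩
  subst hα hβ hγ hδ
  rcases hconv with ⟨-, -, hA, -, -, hB, -, -, hC, -, -, hD, -, -, -⟩ |
    ⟨-, -, -, -, -, hD, -, -, hC, -, -, hB, -, -, hA⟩
  · exact ccw_case A B C D E hA hB hC hD hequi h1 h2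
  · obtain ⟨e1, e2, e3, e4⟩ := hequi
    have h := ccw_case D C B A E hD hC hB hA
      ⟨by simp only [dist_comm] at *; linarith, by simp only [dist_comm] at *; linarith,
        by simp only [dist_comm] at *; linarith, by simp only [dist_comm] at *; linarith⟩
      (by rw [angle_comm E D C, angle_comm D C B]; exact h2)
      (by rw [angle_comm B A E, angle_comm C B A]; exact h1)
    rw [angle_comm E A B, angle_comm C D E]
    exact h.symm
end

section
/- Let ABCDE be a strictly convex equilateral pentagon whose interior angles satisfy 2α + β = 2π and 2δ + γ = 2π (type 8 conditions). Then two of its interior angles sum to π, namely β + ε = π, and moreover β ≠ ε. -/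
/-!
Identify the plane with `ℂ` and take the edge `BC` as unit. In a counterclockwise equilateral
pentagon consecutive edges differ by a rotation through the exterior angle, so the type 8
conditions `β = 2π - 2α`, `γ = 2π - 2δ` turn the five edges `EA, AB, BC, CD, DE` into
`e^{-iα}, -e^{-2iα}, 1, -e^{2iδ}, e^{iδ}`. Their sum vanishes, that is

* `cos α + cos δ - cos 2α - cos 2δ + 1 = 0`,
* `sin α - sin 2α = sin δ - sin 2δ`.

Squaring the second relation gives a polynomial identity in `c = cos α`, `d = cos δ`, which is
divisible by `c - d`; modulo the first relation the cofactor is `-1 - 2 (c + d)`. If it vanished,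
then `c * d = -1/2`, which is impossible because `sin β, sin γ > 0` force `c, d < 0`. Hence `α = δ`
(`cos_eq_of_closed`). The angle at `E` then satisfies `cos ε = -cos (α + δ) = -cos β`, i.e.
`β + ε = π`, while the first relation becomes `4 c² - 2 c - 3 = 0`, which excludes `β = ε = π / 2`.

The pentagon traversed clockwise reduces to the counterclockwise one by the symmetry
`A ↔ D`, `B ↔ C` of the hypotheses.
-/

open EuclideanGeometry

/-- Equal consecutive edges `PQ`, `QR` making a left turn with interior angle `θ` differ by the
rotation with matrix entries `-cos θ`, `sin θ`. Both this rotation and its inverse are recorded. -/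
lemma edge_rotation (P Q R : EuclideanSpace ℝ (Fin 2)) (hd : dist P Q = dist Q R)
    (hl : SLeft P Q R) :
    0 < Real.sin (∠ P Q R) ∧
    R 0 - Q 0 = -Real.cos (∠ P Q R) * (Q 0 - P 0) - Real.sin (∠ P Q R) * (Q 1 - P 1) ∧
    R 1 - Q 1 = -Real.cos (∠ P Q R) * (Q 1 - P 1) + Real.sin (∠ P Q R) * (Q 0 - P 0) ∧
    Q 0 - P 0 = -Real.cos (∠ P Q R) * (R 0 - Q 0) + Real.sin (∠ P Q R) * (R 1 - Q 1) ∧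
    Q 1 - P 1 = -Real.cos (∠ P Q R) * (R 1 - Q 1) - Real.sin (∠ P Q R) * (R 0 - Q 0) := by
  have hcos := InnerProductGeometry.cos_angle_mul_norm_mul_norm (P -ᵥ Q) (R -ᵥ Q)
  have hnn : 0 ≤ Real.sin (∠ P Q R) := InnerProductGeometry.sin_angle_nonneg _ _
  have hsc := Real.sin_sq_add_cos_sq (∠ P Q R)
  have hn : ‖R -ᵥ Q‖ = ‖P -ᵥ Q‖ := by
    rw [← dist_eq_norm_vsub, ← dist_eq_norm_vsub, hd, dist_comm]
  change Real.cos (∠ P Q R) * _ = _ at hcos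
  have hP : ‖P -ᵥ Q‖ ^ 2 = (P 0 - Q 0) ^ 2 + (P 1 - Q 1) ^ 2 := by
    simp [EuclideanSpace.norm_sq_eq, Fin.sum_univ_two]
  have hR : ‖R -ᵥ Q‖ ^ 2 = (R 0 - Q 0) ^ 2 + (R 1 - Q 1) ^ 2 := by
    simp [EuclideanSpace.norm_sq_eq, Fin.sum_univ_two]
  have hin : inner ℝ (P -ᵥ Q) (R -ᵥ Q)
      = (P 0 - Q 0) * (R 0 - Q 0) + (P 1 - Q 1) * (R 1 - Q 1) := by
    simp [PiLp.inner_apply, Fin.sum_univ_two]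
    ring
  rw [hin, hn] at hcos
  rw [hn] at hR
  simp only [SLeft, det2, PiLp.sub_apply] at hl
  generalize Real.cos (∠ P Q R) = c at *
  generalize Real.sin (∠ P Q R) = s at *
  generalize ‖P -ᵥ Q‖ = L at *
  obtain ⟨x, hx⟩ : ∃ x, x = Q 0 - P 0 := ⟨_, rfl⟩
  obtain ⟨y, hy⟩ : ∃ y, y = Q 1 - P 1 := ⟨_, rfl⟩
  obtain ⟨z, hz⟩ : ∃ z, z = R 0 - Q 0 := ⟨_, rfl⟩
  obtain ⟨w, hw⟩ : ∃ w, w = R 1 - Q 1 := ⟨_, rfl⟩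
  have e1 : P 0 - Q 0 = -x := by linarith
  have e2 : P 1 - Q 1 = -y := by linarith
  have e3 : R 0 - P 0 = x + z := by linarith
  have e4 : R 1 - P 1 = y + w := by linarith
  rw [e1, e2] at hP hcos
  rw [← hz, ← hw] at hR hcos
  rw [← hx, ← hy, e3, e4] at hl
  rw [← hx, ← hy, ← hz, ← hw]
  clear hin hn hd e1 e2 e3 e4 hx hy hz hw
  have hdet : 0 < x * w - y * z := by linarith
  have hc2 : x * z + y * w = -c * L ^ 2 := by linarith
  have hL : 0 < L ^ 2 := by
    rcases (sq_nonneg L).lt_or_eq with h | h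
    · exact h
    · have hx0 : x = 0 := by nlinarith
      have hy0 : y = 0 := by nlinarith
      simp [hx0, hy0] at hdet
  -- Lagrange's identity fixes the determinant up to sign, and both sides are nonnegative.
  have hdetsq : (x * w - y * z) ^ 2 = (s * L ^ 2) ^ 2 := by
    have h : (x * w - y * z) ^ 2 + (x * z + y * w) ^ 2 = L ^ 2 * L ^ 2 := by
      nth_rewrite 1 [hP]
      rw [hR]
      ring
    rw [hc2] at h
    linear_combination h - L ^ 4 * hsc
  have hs2 : x * w - y * z = s * L ^ 2 :=
    (sq_eq_sq₀ hdet.le (by positivity)).1 hdetsq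
  have hs : 0 < s := by
    rw [hs2] at hdet
    exact pos_of_mul_pos_left hdet hL.le
  refine ⟨hs, ?_, ?_, ?_, ?_⟩ <;> apply mul_left_cancel₀ hL.ne'
  · linear_combination z * hP + x * hc2 - y * hs2
  · linear_combination w * hP + y * hc2 + x * hs2
  · linear_combination x * hR + z * hc2 + w * hs2
  · linear_combination y * hR + w * hc2 - z * hs2

/-- The closing relations, with `(c, x)` and `(d, y)` the cosines and sines of `α` and `δ`,
force `cos α = cos δ` when both cosines are negative. -/
lemma cos_eq_of_closed {c x d y : ℝ} (hc : c < 0) (hd : d < 0)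
    (h1 : x ^ 2 + c ^ 2 = 1) (h2 : y ^ 2 + d ^ 2 = 1)
    (hre : c + d - 2 * c ^ 2 - 2 * d ^ 2 + 3 = 0)
    (him : x - 2 * x * c = y - 2 * y * d) : c = d := by
  have hsq : (1 - c ^ 2) * (1 - 2 * c) ^ 2 = (1 - d ^ 2) * (1 - 2 * d) ^ 2 := by
    linear_combination (x - 2 * x * c + y - 2 * y * d) * him
      - (1 - 2 * c) ^ 2 * h1 + (1 - 2 * d) ^ 2 * h2
  have hfac : (c - d) * (-1 - 2 * (c + d)) = 0 := by
    linear_combination hsq + (c - d) * (1 - 2 * (c + d)) * hre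
  rcases mul_eq_zero.1 hfac with h | h
  · linarith
  · exfalso
    nlinarith [mul_pos_of_neg_of_neg hc hd]

/-- The counterclockwise case. The quadratic equation for `cos α` is what rules out `β = ε`. -/
lemma ccw_type8 (A B C D E : EuclideanSpace ℝ (Fin 2))
    (hconv : CcwConvex5 A B C D E) (hequi : Equilateral5 A B C D E)
    (h1 : 2 * ∠ E A B + ∠ A B C = 2 * Real.pi) (h2 : 2 * ∠ C D E + ∠ B C D = 2 * Real.pi) :
    ∠ E A B = ∠ C D E ∧ Real.cos (∠ D E A) = -Real.cos (2 * ∠ E A B) ∧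
    4 * Real.cos (∠ E A B) ^ 2 - 2 * Real.cos (∠ E A B) - 3 = 0 := by
  obtain ⟨hABC, -, -, hBCD, -, -, hCDE, -, -, hDEA, -, -, hEAB, -, -⟩ := hconv
  obtain ⟨q1, q2, q3, q4⟩ := hequi
  obtain ⟨sa, -, -, a3, a4⟩ := edge_rotation E A B (by rw [← q4, ← q3, ← q2, ← q1]) hEAB
  obtain ⟨sb, -, -, b3, b4⟩ := edge_rotation A B C q1 hABC
  obtain ⟨sc, c1, c2, -, -⟩ := edge_rotation B C D q2 hBCD
  obtain ⟨sd, d1, d2, -, -⟩ := edge_rotation C D E q3 hCDE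
  obtain ⟨-, e1, e2, -, -⟩ := edge_rotation D E A q4 hDEA
  have hβ : ∠ A B C = 2 * Real.pi - 2 * ∠ E A B := by linarith
  have hγ : ∠ B C D = 2 * Real.pi - 2 * ∠ C D E := by linarith
  rw [hβ, Real.sin_two_pi_sub, Real.sin_two_mul] at sb b3 b4
  rw [hγ, Real.sin_two_pi_sub, Real.sin_two_mul] at sc c1 c2
  rw [Real.cos_two_pi_sub, Real.cos_two_mul] at b3 b4 c1 c2
  have ta := Real.sin_sq_add_cos_sq (∠ E A B)
  have td := Real.sin_sq_add_cos_sq (∠ C D E)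
  have hinj : Real.cos (∠ E A B) = Real.cos (∠ C D E) → ∠ E A B = ∠ C D E := fun h =>
    Real.injOn_cos ⟨InnerProductGeometry.angle_nonneg _ _, InnerProductGeometry.angle_le_pi _ _⟩
      ⟨InnerProductGeometry.angle_nonneg _ _, InnerProductGeometry.angle_le_pi _ _⟩ h
  have hBC : 0 < (C 0 - B 0) ^ 2 + (C 1 - B 1) ^ 2 := by
    by_contra! hcon
    have z0 : C 0 - B 0 = 0 :=
      pow_eq_zero_iff two_ne_zero |>.1
        (by linarith [sq_nonneg (C 0 - B 0), sq_nonneg (C 1 - B 1)])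
    have z1 : C 1 - B 1 = 0 :=
      pow_eq_zero_iff two_ne_zero |>.1
        (by linarith [sq_nonneg (C 0 - B 0), sq_nonneg (C 1 - B 1)])
    simp [SLeft, det2, z0, z1] at hBCD
  rw [Real.cos_two_mul]
  generalize Real.cos (∠ E A B) = c at *
  generalize Real.sin (∠ E A B) = x at *
  generalize Real.cos (∠ C D E) = d at *
  generalize Real.sin (∠ C D E) = y at *
  have hc : c < 0 := by nlinarith only [sa, sb]
  have hd : d < 0 := by nlinarith only [sd, sc]
  obtain ⟨p, hp⟩ : ∃ p, p = C 0 - B 0 := ⟨_, rfl⟩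
  obtain ⟨q, hq⟩ : ∃ q, q = C 1 - B 1 := ⟨_, rfl⟩
  rw [← hp, ← hq] at hBC b3 b4 c1 c2
  -- The edges `EA` and `DE` are `e^{-iα}` and `e^{iδ}` times `BC = (p, q)`.
  have EA0 : A 0 - E 0 = c * p + x * q := by
    rw [a3, b3, b4]
    linear_combination 2 * c * p * ta
  have EA1 : A 1 - E 1 = c * q - x * p := by
    rw [a4, b3, b4]
    linear_combination 2 * c * q * ta
  have DE0 : E 0 - D 0 = d * p - y * q := by
    rw [d1, c1, c2]
    linear_combination 2 * d * p * td
  have DE1 : E 1 - D 1 = d * q + y * p := by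
    rw [d2, c1, c2]
    linear_combination 2 * d * q * td
  have close0 : (c + d - 2 * c ^ 2 - 2 * d ^ 2 + 3) * p
      + (x - 2 * x * c - (y - 2 * y * d)) * q = 0 := by
    linear_combination -EA0 - b3 + hp - c1 - DE0
  have close1 : (c + d - 2 * c ^ 2 - 2 * d ^ 2 + 3) * q
      - (x - 2 * x * c - (y - 2 * y * d)) * p = 0 := by
    linear_combination -EA1 - b4 + hq - c2 - DE1
  have hre : c + d - 2 * c ^ 2 - 2 * d ^ 2 + 3 = 0 := by
    apply mul_left_cancel₀ hBC.ne'
    linear_combination p * close0 + q * close1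
  have him : x - 2 * x * c = y - 2 * y * d := by
    apply mul_left_cancel₀ hBC.ne'
    linear_combination q * close0 - p * close1
  have hcd : c = d := cos_eq_of_closed hc hd ta td hre him
  have hxy : x = y := by
    refine (sq_eq_sq₀ sa.le sd.le).1 ?_
    rw [hcd] at ta
    linarith
  refine ⟨hinj hcd, ?_, ?_⟩
  · rw [EA0, DE0, DE1] at e1
    rw [EA1, DE0, DE1] at e2
    rw [← hcd, ← hxy] at e1 e2
    apply mul_left_cancel₀ hBC.ne'
    generalize Real.cos (∠ D E A) = k at *
    generalize Real.sin (∠ D E A) = s at *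
    -- The inner product of `EA` and `DE` is `-cos ε` times the squared side length.
    linear_combination (c * p - x * q) * e1 + (c * q + x * p) * e2
      + (p ^ 2 + q ^ 2) * (1 - k) * ta
  · rw [← hcd] at hre
    linarith

theorem type8_beta_eps_sum_pi_and_ne
    (A B C D E : EuclideanSpace ℝ (Fin 2)) (α β γ δ ε : ℝ)
    (hconv : ConvexPos5 A B C D E) (hequi : Equilateral5 A B C D E)
    (hα : α = ∠ E A B) (hβ : β = ∠ A B C) (hγ : γ = ∠ B C D)
    (hδ : δ = ∠ C D E) (hε : ε = ∠ D E A)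
    (h1 : 2 * α + β = 2 * Real.pi) (h2 : 2 * δ + γ = 2 * Real.pi) :
    β + ε = Real.pi ∧ β ≠ ε := by
  have hsuff : ∀ θ : ℝ, 2 * θ + β = 2 * Real.pi → Real.cos ε = -Real.cos (2 * θ) →
      4 * Real.cos θ ^ 2 - 2 * Real.cos θ - 3 = 0 → β + ε = Real.pi ∧ β ≠ ε := by
    intro θ hθ hcos hquad
    have hsum : β + ε = Real.pi := by
      have hβ' : Real.cos β = Real.cos (2 * θ) := by
        rw [show β = 2 * Real.pi - 2 * θ by linarith, Real.cos_two_pi_sub]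
      have hinj : ε = Real.pi - β := by
        apply Real.injOn_cos
        · rw [hε]
          exact ⟨InnerProductGeometry.angle_nonneg _ _, InnerProductGeometry.angle_le_pi _ _⟩
        · rw [hβ]
          exact ⟨sub_nonneg.2 (InnerProductGeometry.angle_le_pi _ _),
            sub_le_self _ (InnerProductGeometry.angle_nonneg _ _)⟩
        · rw [Real.cos_pi_sub, hcos, hβ']
      linarith
    refine ⟨hsum, fun hne => ?_⟩
    -- Equality would give `β = π / 2`, so `2 cos² θ = 1`, against the quadratic equation.
    have h2θ : 2 * θ = 2 * Real.pi - Real.pi / 2 := by linarith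
    have hz : Real.cos (2 * θ) = 0 := by
      rw [h2θ, Real.cos_two_pi_sub, Real.cos_pi_div_two]
    rw [Real.cos_two_mul] at hz
    nlinarith
  rcases hconv with hccw | hcw
  · rw [hα, hβ] at h1
    rw [hδ, hγ] at h2
    obtain ⟨-, k2, k3⟩ := ccw_type8 A B C D E hccw hequi h1 h2
    exact hsuff (∠ E A B) (by rw [hβ]; exact h1) (by rw [hε]; exact k2) k3
  · obtain ⟨q1, q2, q3, q4⟩ := hequi
    obtain ⟨t1, t2, t3, t4, t5, t6, t7, t8, t9, t10, t11, t12, t13, t14, t15⟩ := hcw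
    rw [hα, hβ] at h1
    rw [hδ, hγ] at h2
    obtain ⟨k1, k2, k3⟩ := ccw_type8 D C B A E
      ⟨t4, t5, t6, t7, t8, t9, t10, t11, t12, t13, t14, t15, t1, t2, t3⟩
      ⟨by rw [dist_comm D C, dist_comm C B, q2], by rw [dist_comm C B, dist_comm B A, q1],
        by rw [dist_comm B A, dist_comm A E, q1, q2, q3, q4],
        by rw [dist_comm A E, dist_comm E D, q4]⟩
      (by rw [angle_comm E D C, angle_comm D C B]; exact h2)
      (by rw [angle_comm B A E, angle_comm C B A]; exact h1)
    rw [angle_comm A E D] at k2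
    refine hsuff (∠ E D C) ?_ (by rw [hε]; exact k2) k3
    rw [k1, angle_comm B A E, hβ]
    exact h1
end

section
/- Up to similarity there is exactly one strictly convex equilateral pentagon ABCDE whose interior angles satisfy 2β + γ = 2π and 2δ + α = 2π: such a pentagon exists, and any two such pentagons with unit side length are congruent (related by an isometry of the plane, possibly orientation-reversing). -/
/-!
Identify the plane with `ℂ`, scale the sides to length one, and let `z = x + iy`, `w = p + iq` be
the unit complex numbers whose arguments are the exterior angles `π - β`, `π - δ`. Because
`γ = 2π - 2β` and `α = 2π - 2δ`, the sides `AB, BC, CD, DE, EA`, measured relative to `AB`, are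
`1, z, -1/z, -w/z, -w²`, so that the pentagon closes up exactly when
`F = 1 + z - 1/z - w/z - w² = 0`; the real and imaginary parts of this are the equations in `Sys`.

Eliminating `w²` between `F = 0` and its complex conjugate leaves an equation linear in `w`,
which is solved by `w = 2y² / (x² + x - 1 - ixy)` (`Sys.p_eq`, `Sys.q_eq`). The condition `|w| = 1`
then becomes `4x⁴ - 2x³ - 8x² + 2x + 3 = 0` (`Sys.quartic`). This quartic has exactly one root in
`(0, 1)` (`quartic_unique`), and `x, y > 0` since all interior angles are less than `π`. Hence
`(x, y, p, q)` is determined, and it gives the coordinates of all vertices in the orthonormal frame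
at `A` whose first axis points to `B` (`pentagon_shape`); matching the two frames is the required
isometry (`exists_frame_isometry`).

Conversely, the root near `0.815` and the formulas for `w` satisfy the closing equations
(`exists_solution`), and the resulting pentagon is strictly convex.
-/

open EuclideanGeometry

/-- The closing conditions of the pentagon for the unit complex numbers `z = x + iy` and
`w = p + iq`: the real and imaginary parts of `1 + z - 1/z - w/z - w² = 0`, together with the
positivity coming from strict convexity. -/
structure Sys (x y p q : ℝ) : Prop where
  hx : 0 < x
  hy : 0 < y
  hz : x ^ 2 + y ^ 2 = 1
  hw : p ^ 2 + q ^ 2 = 1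
  re : 1 - (p * x + q * y) - (p ^ 2 - q ^ 2) = 0
  im : 2 * y - (q * x - p * y) - 2 * p * q = 0

/-! ### The algebraic system -/

/-- The linear equation for `w`, obtained by eliminating `w²` between the closing equation and its
complex conjugate. -/
lemma Sys.linear {x y p q : ℝ} (h : Sys x y p q) :
    p * (x ^ 2 + x - 1) + q * (x * y) = 2 * y ^ 2 ∧ q * (x ^ 2 + x - 1) - p * (x * y) = 0 := by
  obtain ⟨hx, hy, hz, hw, re, im⟩ := h
  -- With `F = re + i im`, they are up to a factor the parts of `(-1 + 2iy) F - w² conj F`.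
  constructor
  · grind
  · grind

lemma Sys.p_eq {x y p q : ℝ} (h : Sys x y p q) : p * (2 * y ^ 2) = x ^ 2 + x - 1 := by
  obtain ⟨h1, h2⟩ := h.linear
  have hw := h.hw
  linear_combination (-p) * h1 - q * h2 + (x ^ 2 + x - 1) * hw

lemma Sys.q_eq {x y p q : ℝ} (h : Sys x y p q) : q * (2 * y) = x := by
  obtain ⟨h1, h2⟩ := h.linear
  have hw := h.hw
  have hy := h.hy
  have : y * (q * (2 * y) - x) = 0 := by
    linear_combination (-q) * h1 + p * h2 + x * y * hw
  rcases mul_eq_zero.1 this with h0 | h0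
  · exact absurd h0 hy.ne'
  · linarith

lemma Sys.quartic {x y p q : ℝ} (h : Sys x y p q) :
    4 * x ^ 4 - 2 * x ^ 3 - 8 * x ^ 2 + 2 * x + 3 = 0 := by
  have h1 := h.p_eq
  have h2 := h.q_eq
  have hw := h.hw
  have hy2 : y ^ 2 = 1 - x ^ 2 := by linarith [h.hz]
  have key : (x ^ 2 + x - 1) ^ 2 + x ^ 2 * y ^ 2 = 4 * (y ^ 2) ^ 2 := by
    rw [← h1]
    linear_combination 4 * y ^ 4 * hw - y ^ 2 * (q * (2 * y) + x) * h2
  rw [hy2] at key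
  linear_combination -key

lemma quartic_root_gt {x : ℝ} (h0 : 0 < x)
    (h : 4 * x ^ 4 - 2 * x ^ 3 - 8 * x ^ 2 + 2 * x + 3 = 0) : 3 / 5 < x := by
  by_contra! hx
  -- On `[0, 3/5]` one has `8x² + 2x³ ≤ (24/5 + 18/25) x`, hence the quartic is positive there.
  nlinarith [mul_nonneg h0.le (sub_nonneg.2 hx),
    mul_nonneg (mul_nonneg h0.le h0.le) (sub_nonneg.2 hx), sq_nonneg (x ^ 2)]

lemma quartic_unique {x t : ℝ} (hx0 : 0 < x) (hx1 : x < 1) (ht0 : 0 < t) (ht1 : t < 1)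
    (hx : 4 * x ^ 4 - 2 * x ^ 3 - 8 * x ^ 2 + 2 * x + 3 = 0)
    (ht : 4 * t ^ 4 - 2 * t ^ 3 - 8 * t ^ 2 + 2 * t + 3 = 0) : x = t := by
  have h1 := quartic_root_gt hx0 hx
  have h2 := quartic_root_gt ht0 ht
  -- The divided difference of the quartic is negative on `(3/5, 1)²`.
  have hneg : 4 * (x + t) * (x ^ 2 + t ^ 2 - 2) - 2 * (x ^ 2 + x * t + t ^ 2) + 2 < 0 := by
    have e1 : 0 < (x + t) * (2 - x ^ 2 - t ^ 2) := by
      apply mul_pos (by linarith); nlinarith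
    have e2 : 1 < x ^ 2 + x * t + t ^ 2 := by
      nlinarith [mul_pos (sub_pos.2 h1) (sub_pos.2 h2)]
    nlinarith
  have : (x - t) * (4 * (x + t) * (x ^ 2 + t ^ 2 - 2) - 2 * (x ^ 2 + x * t + t ^ 2) + 2) = 0 := by
    linear_combination hx - ht
  rcases mul_eq_zero.1 this with h0 | h0
  · linarith
  · exact absurd h0 hneg.ne

lemma Sys.lt_one {x y p q : ℝ} (h : Sys x y p q) : x < 1 := by
  nlinarith [h.hz, h.hy, h.hx, mul_pos h.hy h.hy]

lemma Sys.unique {x y p q x' y' p' q' : ℝ} (h : Sys x y p q) (h' : Sys x' y' p' q') :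
    x = x' ∧ y = y' ∧ p = p' ∧ q = q' := by
  have hx : x = x' := quartic_unique h.hx h.lt_one h'.hx h'.lt_one h.quartic h'.quartic
  subst hx
  have hy : y = y' := by
    have : y ^ 2 = y' ^ 2 := by linarith [h.hz, h'.hz]
    exact (pow_left_inj₀ h.hy.le h'.hy.le two_ne_zero).1 this
  subst hy
  have hy := h.hy
  refine ⟨rfl, rfl, ?_, ?_⟩
  · exact mul_right_cancel₀ (by positivity) (h.p_eq.trans h'.p_eq.symm)
  · exact mul_right_cancel₀ (by positivity) (h.q_eq.trans h'.q_eq.symm)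

/-- A solution of the system, with bounds sharp enough to check strict convexity. -/
lemma exists_solution : ∃ x y p q : ℝ, Sys x y p q ∧
    0.81 ≤ x ∧ x ≤ 0.82 ∧ 0.57 ≤ y ∧ y ≤ 0.59 ∧ 0.66 ≤ p ∧ p ≤ 0.76 ∧ 0.68 ≤ q ∧ q ≤ 0.72 := by
  obtain ⟨x, ⟨hx1, hx2⟩, hx⟩ : ∃ x ∈ Set.Icc (0.81 : ℝ) 0.82,
      4 * x ^ 4 - 2 * x ^ 3 - 8 * x ^ 2 + 2 * x + 3 = 0 := by
    have hc : ContinuousOn (fun x : ℝ => 4 * x ^ 4 - 2 * x ^ 3 - 8 * x ^ 2 + 2 * x + 3)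
        (Set.Icc (0.81 : ℝ) 0.82) := by fun_prop
    have := intermediate_value_Icc' (by norm_num) hc
    exact this ⟨by norm_num, by norm_num⟩
  have hpos : 0 < 1 - x ^ 2 := by nlinarith
  obtain ⟨y, hy, hyy⟩ : ∃ y : ℝ, 0 < y ∧ y ^ 2 = 1 - x ^ 2 :=
    ⟨√(1 - x ^ 2), Real.sqrt_pos.2 hpos, Real.sq_sqrt hpos.le⟩
  have hy1 : 0.57 ≤ y := by nlinarith
  have hy2 : y ≤ 0.59 := by nlinarith
  obtain ⟨p, hp⟩ : ∃ p : ℝ, p * (2 * y ^ 2) = x ^ 2 + x - 1 :=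
    ⟨(x ^ 2 + x - 1) / (2 * y ^ 2), by field_simp⟩
  obtain ⟨q, hq⟩ : ∃ q : ℝ, q * (2 * y) = x := ⟨x / (2 * y), by field_simp⟩
  have hy0 : y ≠ 0 := hy.ne'
  have hq1 : 0.68 ≤ q := by nlinarith
  have hq2 : q ≤ 0.72 := by nlinarith
  have hw : p ^ 2 + q ^ 2 = 1 := by
    have : 4 * y ^ 4 * (p ^ 2 + q ^ 2 - 1) = 0 := by
      have e1 : 4 * y ^ 4 * (p ^ 2 + q ^ 2 - 1)
        = (p * (2 * y ^ 2)) ^ 2 + (q * (2 * y)) ^ 2 * y ^ 2 - 4 * (y ^ 2) ^ 2 := by ring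
      rw [e1, hp, hq, hyy]
      linear_combination -hx
    have h4 : 4 * y ^ 4 ≠ 0 := by positivity
    have := (mul_eq_zero.1 this).resolve_left h4
    linarith
  have hp0 : 0 < p := by
    by_contra! hp0
    nlinarith [mul_nonneg (neg_nonneg.2 hp0) (sq_nonneg y)]
  refine ⟨x, y, p, q, ⟨by linarith, hy, by linarith, hw, ?_, ?_⟩, hx1, hx2, hy1, hy2,
    by nlinarith, by nlinarith, hq1, hq2⟩
  · have h4 : 4 * y ^ 4 ≠ 0 := by positivity
    refine (mul_eq_zero.1 (?_ : 4 * y ^ 4 * _ = 0)).resolve_left h4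
    have e1 : 4 * y ^ 4 * (1 - (p * x + q * y) - (p ^ 2 - q ^ 2))
        = 4 * (y ^ 2) ^ 2 - 2 * y ^ 2 * x * (p * (2 * y ^ 2)) - 2 * (y ^ 2) ^ 2 * (q * (2 * y))
          - (p * (2 * y ^ 2)) ^ 2 + y ^ 2 * (q * (2 * y)) ^ 2 := by ring
    rw [e1, hp, hq, hyy]
    linear_combination hx
  · have h4 : 2 * y ^ 3 ≠ 0 := by positivity
    refine (mul_eq_zero.1 (?_ : 2 * y ^ 3 * _ = 0)).resolve_left h4
    have e1 : 2 * y ^ 3 * (2 * y - (q * x - p * y) - 2 * p * q)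
        = 4 * (y ^ 2) ^ 2 - y ^ 2 * x * (q * (2 * y)) + y ^ 2 * (p * (2 * y ^ 2))
          - (p * (2 * y ^ 2)) * (q * (2 * y)) := by ring
    rw [e1, hp, hq, hyy]
    linear_combination hx

/-! ### Coordinates, angles and turns -/

lemma dist_eq_one_iff (P Q : EuclideanSpace ℝ (Fin 2)) :
    dist P Q = 1 ↔ (P 0 - Q 0) ^ 2 + (P 1 - Q 1) ^ 2 = 1 := by
  rw [EuclideanSpace.dist_eq, Real.sqrt_eq_one]
  simp [Fin.sum_univ_two, Real.dist_eq, sq_abs]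

lemma cos_angle_of_unit {P Q R : EuclideanSpace ℝ (Fin 2)} (h1 : dist P Q = 1)
    (h2 : dist Q R = 1) :
    Real.cos (∠ P Q R) = (P 0 - Q 0) * (R 0 - Q 0) + (P 1 - Q 1) * (R 1 - Q 1) := by
  rw [EuclideanGeometry.angle, InnerProductGeometry.cos_angle]
  rw [vsub_eq_sub, vsub_eq_sub, ← dist_eq_norm, ← dist_eq_norm, h1, dist_comm, h2]
  simp [PiLp.inner_apply, Fin.sum_univ_two]
  ring

/-- At the corner `PQR` of a unit-sided polygon with orientation sign `s`, the determinant of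
consecutive edge vectors is, up to `s`, the sine of the interior angle. -/
lemma sin_angle_of_unit {P Q R : EuclideanSpace ℝ (Fin 2)} {s : ℝ} (hs : s ^ 2 = 1)
    (h1 : dist P Q = 1) (h2 : dist Q R = 1) (hd : 0 < s * det2 (Q - P) (R - Q)) :
    s * ((Q 0 - P 0) * (R 1 - Q 1) - (Q 1 - P 1) * (R 0 - Q 0)) = Real.sin (∠ P Q R) := by
  have hc := cos_angle_of_unit h1 h2
  have hsc := Real.sin_sq_add_cos_sq (∠ P Q R)
  have hnn := InnerProductGeometry.sin_angle_nonneg (P -ᵥ Q) (R -ᵥ Q)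
  change 0 ≤ Real.sin (∠ P Q R) at hnn
  rw [dist_eq_one_iff] at h1 h2
  simp only [det2, PiLp.sub_apply] at hd
  refine (pow_left_inj₀ hd.le hnn two_ne_zero).1 ?_
  rw [hc] at hsc
  linear_combination
    ((Q 0 - P 0) * (R 1 - Q 1) - (Q 1 - P 1) * (R 0 - Q 0)) ^ 2 * hs - hsc
      + ((Q 0 - R 0) ^ 2 + (Q 1 - R 1) ^ 2) * h1 + h2

/-- In the frame at `A` formed by `B - A` and its rotation by `s · π/2`, where `s = ±1` is the
orientation, the vertices `C`, `D`, `E` are `1 + z`, `1 + z - 1/z` and `w²`, for `z = x + iy` a unit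
complex number and `w = p + iq`. -/
def InFrame (A B C D E : EuclideanSpace ℝ (Fin 2)) (s x y p q : ℝ) : Prop :=
  C 0 = A 0 + (1 + x) * (B 0 - A 0) - s * y * (B 1 - A 1) ∧
  C 1 = A 1 + (1 + x) * (B 1 - A 1) + s * y * (B 0 - A 0) ∧
  D 0 = A 0 + (B 0 - A 0) - s * (2 * y) * (B 1 - A 1) ∧
  D 1 = A 1 + (B 1 - A 1) + s * (2 * y) * (B 0 - A 0) ∧
  E 0 = A 0 + (p ^ 2 - q ^ 2) * (B 0 - A 0) - s * (2 * p * q) * (B 1 - A 1) ∧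
  E 1 = A 1 + (p ^ 2 - q ^ 2) * (B 1 - A 1) + s * (2 * p * q) * (B 0 - A 0)

/-- The scalar form of "`v` is `u` turned by the angle with cosine `c` and sine `t`". -/
lemma turn_eq {u0 u1 v0 v1 s c t : ℝ} (hs : s ^ 2 = 1) (hu : u0 ^ 2 + u1 ^ 2 = 1)
    (hc : u0 * v0 + u1 * v1 = c) (ht : s * (u0 * v1 - u1 * v0) = t) :
    v0 = c * u0 - s * t * u1 ∧ v1 = c * u1 + s * t * u0 := by
  subst hc ht
  constructor
  · linear_combination (-v0) * hu + (u0 * v1 - u1 * v0) * u1 * hs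
  · linear_combination (-v1) * hu - (u0 * v1 - u1 * v0) * u0 * hs

set_option maxHeartbeats 1000000 in
lemma pentagon_shape {A B C D E : EuclideanSpace ℝ (Fin 2)} {s : ℝ} (hs : s ^ 2 = 1)
    (dB : 0 < s * det2 (B - A) (C - B)) (dC : 0 < s * det2 (C - B) (D - C))
    (dD : 0 < s * det2 (D - C) (E - D)) (dA : 0 < s * det2 (A - E) (B - A))
    (hAB : dist A B = 1) (hBC : dist B C = 1) (hCD : dist C D = 1) (hDE : dist D E = 1)
    (hEA : dist E A = 1)
    (h1 : 2 * ∠ A B C + ∠ B C D = 2 * Real.pi) (h2 : 2 * ∠ C D E + ∠ E A B = 2 * Real.pi) :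
    ∃ x y p q : ℝ, Sys x y p q ∧ InFrame A B C D E s x y p q := by
  have cB := cos_angle_of_unit hAB hBC
  have cC := cos_angle_of_unit hBC hCD
  have cD := cos_angle_of_unit hCD hDE
  have cA := cos_angle_of_unit hEA hAB
  have sB := sin_angle_of_unit hs hAB hBC dB
  have sC := sin_angle_of_unit hs hBC hCD dC
  have sD := sin_angle_of_unit hs hCD hDE dD
  have sA := sin_angle_of_unit hs hEA hAB dA
  have eC : ∠ B C D = 2 * Real.pi - 2 * ∠ A B C := by linarith
  have eA : ∠ E A B = 2 * Real.pi - 2 * ∠ C D E := by linarith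
  rw [eC, Real.cos_two_pi_sub, Real.cos_two_mul] at cC
  rw [eC, Real.sin_two_pi_sub, Real.sin_two_mul] at sC
  rw [eA, Real.cos_two_pi_sub, Real.cos_two_mul] at cA
  rw [eA, Real.sin_two_pi_sub, Real.sin_two_mul] at sA
  have nz := Real.sin_sq_add_cos_sq (∠ A B C)
  have nw := Real.sin_sq_add_cos_sq (∠ C D E)
  simp only [det2, PiLp.sub_apply] at dB dC
  rw [sB] at dB
  rw [sC] at dC
  rw [dist_eq_one_iff] at hAB hBC hCD hDE hEA
  obtain ⟨x, hx⟩ : ∃ x, Real.cos (∠ A B C) = -x := ⟨_, (neg_neg _).symm⟩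
  obtain ⟨p, hp⟩ : ∃ p, Real.cos (∠ C D E) = -p := ⟨_, (neg_neg _).symm⟩
  obtain ⟨y, hy⟩ : ∃ y, Real.sin (∠ A B C) = y := ⟨_, rfl⟩
  obtain ⟨q, hq⟩ : ∃ q, Real.sin (∠ C D E) = q := ⟨_, rfl⟩
  rw [hx] at cB cC sC nz dC
  rw [hy] at sB sC nz dB dC
  rw [hp] at cD cA sA nw
  rw [hq] at sD sA nw
  have hx0 : 0 < x := by
    by_contra! h
    nlinarith [mul_nonneg dB.le (neg_nonneg.2 h)]
  have tB := turn_eq (v0 := C 0 - B 0) (v1 := C 1 - B 1) (u0 := B 0 - A 0) (u1 := B 1 - A 1)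
    (c := x) (t := y) hs (by linear_combination hAB) (by linear_combination cB) sB
  have tC := turn_eq (v0 := D 0 - C 0) (v1 := D 1 - C 1) (u0 := C 0 - B 0) (u1 := C 1 - B 1)
    (c := 1 - 2 * x ^ 2) (t := 2 * x * y) hs (by linear_combination hBC)
    (by linear_combination cC) (by linear_combination sC)
  have tD := turn_eq (v0 := E 0 - D 0) (v1 := E 1 - D 1) (u0 := D 0 - C 0) (u1 := D 1 - C 1)
    (c := p) (t := q) hs (by linear_combination hCD) (by linear_combination cD) sD
  -- The edge `EA` is obtained from `AB` by the reverse turn.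
  have tA := turn_eq (v0 := A 0 - E 0) (v1 := A 1 - E 1) (u0 := B 0 - A 0) (u1 := B 1 - A 1)
    (c := 1 - 2 * p ^ 2) (t := -(2 * p * q)) hs (by linear_combination hAB)
    (by linear_combination cA) (by linear_combination -sA)
  obtain ⟨b0, hb0⟩ : ∃ b, B 0 - A 0 = b := ⟨_, rfl⟩
  obtain ⟨b1, hb1⟩ : ∃ b, B 1 - A 1 = b := ⟨_, rfl⟩
  have hb : b0 ^ 2 + b1 ^ 2 = 1 := by rw [← hb0, ← hb1]; linear_combination hAB
  rw [hb0, hb1] at tB tA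
  obtain ⟨tB0, tB1⟩ := tB
  obtain ⟨tC0, tC1⟩ := tC
  obtain ⟨tD0, tD1⟩ := tD
  obtain ⟨tA0, tA1⟩ := tA
  rw [tB0, tB1] at tC0 tC1
  have hz : x ^ 2 + y ^ 2 = 1 := by linear_combination nz
  have hw : p ^ 2 + q ^ 2 = 1 := by linear_combination nw
  have tC0' : D 0 - C 0 = -x * b0 - s * y * b1 := by
    rw [tC0]
    linear_combination (-2 * x * y ^ 2 * b0) * hs + (-2 * x * b0) * hz
  have tC1' : D 1 - C 1 = -x * b1 + s * y * b0 := by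
    rw [tC1]
    linear_combination (-2 * x * y ^ 2 * b1) * hs + (-2 * x * b1) * hz
  rw [tC0', tC1'] at tD0 tD1
  have e0 : (1 - (p * x + q * y) - (p ^ 2 - q ^ 2)) * b0
      - s * (2 * y - (q * x - p * y) - 2 * p * q) * b1 = 0 := by
    linear_combination (-hb0) - tB0 - tC0' - tD0 - tA0 + q * y * b0 * hs + b0 * hw
  have e1 : (1 - (p * x + q * y) - (p ^ 2 - q ^ 2)) * b1
      + s * (2 * y - (q * x - p * y) - 2 * p * q) * b0 = 0 := by
    linear_combination (-hb1) - tB1 - tC1' - tD1 - tA1 + q * y * b1 * hs + b1 * hw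
  refine ⟨x, y, p, q, ⟨hx0, dB, hz, hw, ?_, ?_⟩, ?_, ?_, ?_, ?_, ?_, ?_⟩
  · linear_combination b0 * e0 + b1 * e1 - (1 - (p * x + q * y) - (p ^ 2 - q ^ 2)) * hb
  · linear_combination s * (b0 * e1 - b1 * e0)
      - (2 * y - (q * x - p * y) - 2 * p * q) * (hs + s ^ 2 * hb)
  · rw [hb0, hb1]; linear_combination tB0 + hb0
  · rw [hb0, hb1]; linear_combination tB1 + hb1
  · rw [hb0, hb1]; linear_combination tB0 + hb0 + tC0'
  · rw [hb0, hb1]; linear_combination tB1 + hb1 + tC1'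
  · rw [hb0, hb1]; linear_combination -tA0 + b0 * hw
  · rw [hb0, hb1]; linear_combination -tA1 + b1 * hw

lemma pentagon_shape' {A B C D E : EuclideanSpace ℝ (Fin 2)} (hc : ConvexPos5 A B C D E)
    (he : Equilateral5 A B C D E) (hAB : dist A B = 1)
    (h1 : 2 * ∠ A B C + ∠ B C D = 2 * Real.pi) (h2 : 2 * ∠ C D E + ∠ E A B = 2 * Real.pi) :
    ∃ s : ℝ, s ^ 2 = 1 ∧ ∃ x y p q : ℝ, Sys x y p q ∧ InFrame A B C D E s x y p q := by
  obtain ⟨e1, e2, e3, e4⟩ := he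
  have hBC := e1.symm.trans hAB
  have hCD := e2.symm.trans hBC
  have hDE := e3.symm.trans hCD
  have hEA := e4.symm.trans hDE
  rcases hc with hc | hc
  · obtain ⟨hB, -, -, hC, -, -, hD, -, -, -, -, -, hA, -, -⟩ := hc
    refine ⟨1, by norm_num, pentagon_shape (by norm_num) ?_ ?_ ?_ ?_ hAB hBC hCD hDE hEA h1 h2⟩ <;>
    · simp only [SLeft, det2, PiLp.sub_apply] at *
      linarith
  · obtain ⟨hD, -, -, hC, -, -, hB, -, -, hA, -, -, -, -, -⟩ := hc
    refine ⟨-1, by norm_num, pentagon_shape (by norm_num) ?_ ?_ ?_ ?_ hAB hBC hCD hDE hEA h1 h2⟩ <;>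
    · simp only [SLeft, det2, PiLp.sub_apply] at *
      linarith

/-! ### The isometry -/

/-- The map that reads off coordinates in the frame at `A` with first axis `(a, b)` and second axis
its rotation by `σ · π/2`, and reproduces them in the frame at `A'` with axes `(a', b')` and
`(-b', a')`. -/
noncomputable def frameMap (A A' : EuclideanSpace ℝ (Fin 2)) (a b a' b' σ : ℝ)
    (X : EuclideanSpace ℝ (Fin 2)) : EuclideanSpace ℝ (Fin 2) :=
  !₂[A' 0 + ((X 0 - A 0) * a + (X 1 - A 1) * b) * a'
        - σ * ((X 1 - A 1) * a - (X 0 - A 0) * b) * b',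
     A' 1 + ((X 0 - A 0) * a + (X 1 - A 1) * b) * b'
        + σ * ((X 1 - A 1) * a - (X 0 - A 0) * b) * a']

lemma frameMap_isometry {A A' : EuclideanSpace ℝ (Fin 2)} {a b a' b' σ : ℝ}
    (hσ : σ ^ 2 = 1) (h : a ^ 2 + b ^ 2 = 1) (h' : a' ^ 2 + b' ^ 2 = 1) :
    Isometry (frameMap A A' a b a' b' σ) := by
  refine Isometry.of_dist_eq fun X Y => ?_
  rw [EuclideanSpace.dist_eq, EuclideanSpace.dist_eq]
  congr 1
  simp only [Fin.sum_univ_two, Real.dist_eq, sq_abs, frameMap]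
  simp only [Matrix.cons_val_zero, Matrix.cons_val_one]
  linear_combination
    ((((X 0 - Y 0) * a + (X 1 - Y 1) * b) ^ 2
      + σ ^ 2 * ((X 1 - Y 1) * a - (X 0 - Y 0) * b) ^ 2)) * h'
    + ((X 1 - Y 1) * a - (X 0 - Y 0) * b) ^ 2 * hσ
    + ((X 0 - Y 0) ^ 2 + (X 1 - Y 1) ^ 2) * h

/-- A point with frame coordinates `(c, s t)` at `A` goes to the point with frame coordinates
`(c, s' t)` at `A'`, for orientation signs `s`, `s'` and `σ = s s'`. -/
lemma frameMap_eq {A A' X X' : EuclideanSpace ℝ (Fin 2)} {a b a' b' s s' c t : ℝ}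
    (hs : s ^ 2 = 1) (h : a ^ 2 + b ^ 2 = 1)
    (h0 : X 0 = A 0 + c * a - s * t * b) (h1 : X 1 = A 1 + c * b + s * t * a)
    (h0' : X' 0 = A' 0 + c * a' - s' * t * b') (h1' : X' 1 = A' 1 + c * b' + s' * t * a') :
    frameMap A A' a b a' b' (s * s') X = X' := by
  have e1 : (X 0 - A 0) * a + (X 1 - A 1) * b = c := by
    rw [h0, h1]; linear_combination c * h
  have e2 : s * s' * ((X 1 - A 1) * a - (X 0 - A 0) * b) = s' * t := by
    rw [h0, h1]; linear_combination s ^ 2 * s' * t * h + s' * t * hs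
  ext i
  fin_cases i
  · simp [frameMap, e1, e2, h0']
  · simp [frameMap, e1, e2, h1']

lemma exists_frame_isometry (A A' : EuclideanSpace ℝ (Fin 2)) {a b a' b' σ : ℝ}
    (hσ : σ ^ 2 = 1) (h : a ^ 2 + b ^ 2 = 1) (h' : a' ^ 2 + b' ^ 2 = 1) :
    ∃ f : EuclideanSpace ℝ (Fin 2) ≃ᵢ EuclideanSpace ℝ (Fin 2),
      ∀ X, f X = frameMap A A' a b a' b' σ X := by
  refine ⟨IsometryEquiv.mk' (frameMap A A' a b a' b' σ) (frameMap A' A a' b' a b σ)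
    (fun X => ?_) (frameMap_isometry hσ h h'), fun X => rfl⟩
  have e1 : (frameMap A' A a' b' a b σ X 0 - A 0) * a + (frameMap A' A a' b' a b σ X 1 - A 1) * b
      = (X 0 - A' 0) * a' + (X 1 - A' 1) * b' := by
    simp [frameMap]
    linear_combination ((X 0 - A' 0) * a' + (X 1 - A' 1) * b') * h
  have e2 : σ * ((frameMap A' A a' b' a b σ X 1 - A 1) * a
      - (frameMap A' A a' b' a b σ X 0 - A 0) * b)
      = (X 1 - A' 1) * a' - (X 0 - A' 0) * b' := by
    simp [frameMap]
    linear_combination ((X 1 - A' 1) * a' - (X 0 - A' 0) * b') * (hσ + σ ^ 2 * h)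
  ext i
  rw [frameMap, e1, e2]
  fin_cases i
  · simp
    linear_combination (X 0 - A' 0) * h'
  · simp
    linear_combination h' * (-A' 1 + X 1 * 1)

/-! ### Existence -/

lemma two_angle_add {β γ : ℝ} (hβ0 : 0 ≤ β) (hβ1 : β ≤ Real.pi) (hγ0 : 0 ≤ γ) (hγ1 : γ ≤ Real.pi)
    (hc : Real.cos β ≤ 0) (h : Real.cos γ = 2 * Real.cos β ^ 2 - 1) :
    2 * β + γ = 2 * Real.pi := by
  have hβ : Real.pi / 2 ≤ β := by
    by_contra! hlt
    exact absurd (Real.cos_pos_of_mem_Ioo ⟨by linarith [Real.pi_pos], hlt⟩) (not_lt.2 hc)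
  have : γ = 2 * Real.pi - 2 * β := by
    refine Real.injOn_cos ⟨hγ0, hγ1⟩ ⟨by linarith, by linarith⟩ ?_
    rw [Real.cos_two_pi_sub, Real.cos_two_mul, h]
  linarith

set_option maxHeartbeats 1000000 in
lemma exists_pentagon : ∃ A B C D E : EuclideanSpace ℝ (Fin 2),
      ConvexPos5 A B C D E ∧ Equilateral5 A B C D E ∧
      2 * ∠ A B C + ∠ B C D = 2 * Real.pi ∧
      2 * ∠ C D E + ∠ E A B = 2 * Real.pi := by
  obtain ⟨x, y, p, q, ⟨hx, hy, hz, hw, re, im⟩, hx1, hx2, hy1, hy2, hp1, hp2, hq1, hq2⟩ :=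
    exists_solution
  obtain ⟨e, he⟩ : ∃ e, p ^ 2 - q ^ 2 = e := ⟨_, rfl⟩
  obtain ⟨g, hg⟩ : ∃ g, 2 * p * q = g := ⟨_, rfl⟩
  have he1 : -0.04 ≤ e := by nlinarith
  have he2 : e ≤ 0.08 := by nlinarith
  have hg1 : 0.89 ≤ g := by nlinarith
  have hg2 : g ≤ 1.1 := by nlinarith
  have hAB : dist (!₂[0, 0] : EuclideanSpace ℝ (Fin 2)) !₂[1, 0] = 1 := by
    rw [dist_eq_one_iff]; simp
  have hBC : dist (!₂[1, 0] : EuclideanSpace ℝ (Fin 2)) !₂[1 + x, y] = 1 := by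
    rw [dist_eq_one_iff]; simp; linear_combination hz
  have hCD : dist (!₂[1 + x, y] : EuclideanSpace ℝ (Fin 2)) !₂[1, 2 * y] = 1 := by
    rw [dist_eq_one_iff]; simp; linear_combination hz
  -- The closing equations say that `DE` is the edge `-w/z`.
  have hE0 : e - 1 = -(p * x + q * y) := by rw [← he]; linear_combination -re
  have hE1 : g - 2 * y = -(q * x - p * y) := by rw [← hg]; linear_combination -im
  have hDE : dist (!₂[1, 2 * y] : EuclideanSpace ℝ (Fin 2)) !₂[e, g] = 1 := by
    rw [dist_eq_one_iff]; simp
    have e1 : (1 - e) ^ 2 + (2 * y - g) ^ 2 = (e - 1) ^ 2 + (g - 2 * y) ^ 2 := by ring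
    rw [e1, hE0, hE1]
    linear_combination (p ^ 2 + q ^ 2) * hz + hw
  have hEA : dist (!₂[e, g] : EuclideanSpace ℝ (Fin 2)) !₂[0, 0] = 1 := by
    rw [dist_eq_one_iff]; simp
    rw [← he, ← hg]
    linear_combination (p ^ 2 + q ^ 2 + 1) * hw
  refine ⟨!₂[0, 0], !₂[1, 0], !₂[1 + x, y], !₂[1, 2 * y], !₂[e, g], Or.inl ?_,
    ⟨hAB.trans hBC.symm, hBC.trans hCD.symm, hCD.trans hDE.symm, hDE.trans hEA.symm⟩, ?_, ?_⟩
  · have hxy := mul_pos hx hy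
    have m1 := mul_nonneg (sub_nonneg.2 hx2) (sub_nonneg.2 hg2)
    have m2 := mul_nonneg (sub_nonneg.2 hx1) (sub_nonneg.2 hy1)
    have m3 := mul_nonneg (sub_nonneg.2 hy1) (sub_nonneg.2 he2)
    have m4 := mul_nonneg (sub_nonneg.2 hx1) (sub_nonneg.2 hg1)
    have m5 := mul_nonneg (sub_nonneg.2 hy1) (sub_nonneg.2 he1)
    simp only [CcwConvex5, SLeft, det2, PiLp.sub_apply, Matrix.cons_val_zero, Matrix.cons_val_one]
    refine ⟨?_, ?_, ?_, ?_, ?_, ?_, ?_, ?_, ?_, ?_, ?_, ?_, ?_, ?_, ?_⟩ <;> nlinarith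
  · refine two_angle_add (EuclideanGeometry.angle_nonneg _ _ _) (EuclideanGeometry.angle_le_pi _ _ _)
      (EuclideanGeometry.angle_nonneg _ _ _) (EuclideanGeometry.angle_le_pi _ _ _) ?_ ?_
    · rw [cos_angle_of_unit hAB hBC]; simp; linarith
    · rw [cos_angle_of_unit hAB hBC, cos_angle_of_unit hBC hCD]; simp; linear_combination -hz
  · have hcD : Real.cos (∠ (!₂[1 + x, y] : EuclideanSpace ℝ (Fin 2)) !₂[1, 2 * y] !₂[e, g]) = -p := by
      rw [cos_angle_of_unit hCD hDE]; simp
      rw [hE0, hE1]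
      linear_combination -p * hz
    refine two_angle_add (EuclideanGeometry.angle_nonneg _ _ _) (EuclideanGeometry.angle_le_pi _ _ _)
      (EuclideanGeometry.angle_nonneg _ _ _) (EuclideanGeometry.angle_le_pi _ _ _) ?_ ?_
    · rw [hcD]; linarith
    · rw [hcD, cos_angle_of_unit hEA hAB]; simp; linear_combination -he - hw

theorem type7_exists_unique_up_to_congruence :
    (∃ A B C D E : EuclideanSpace ℝ (Fin 2),
      ConvexPos5 A B C D E ∧ Equilateral5 A B C D E ∧
      2 * ∠ A B C + ∠ B C D = 2 * Real.pi ∧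
      2 * ∠ C D E + ∠ E A B = 2 * Real.pi) ∧
    (∀ A B C D E A' B' C' D' E' : EuclideanSpace ℝ (Fin 2),
      ConvexPos5 A B C D E → Equilateral5 A B C D E → dist A B = 1 →
      2 * ∠ A B C + ∠ B C D = 2 * Real.pi →
      2 * ∠ C D E + ∠ E A B = 2 * Real.pi →
      ConvexPos5 A' B' C' D' E' → Equilateral5 A' B' C' D' E' → dist A' B' = 1 →
      2 * ∠ A' B' C' + ∠ B' C' D' = 2 * Real.pi →
      2 * ∠ C' D' E' + ∠ E' A' B' = 2 * Real.pi →
      ∃ f : EuclideanSpace ℝ (Fin 2) ≃ᵢ EuclideanSpace ℝ (Fin 2),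
        f A = A' ∧ f B = B' ∧ f C = C' ∧ f D = D' ∧ f E = E') := by
  refine ⟨exists_pentagon, ?_⟩
  intro A B C D E A' B' C' D' E' hc he hAB h1 h2 hc' he' hAB' h1' h2'
  obtain ⟨s, hs, x, y, p, q, hsys, hfr⟩ := pentagon_shape' hc he hAB h1 h2
  obtain ⟨s', hs', x', y', p', q', hsys', hfr'⟩ := pentagon_shape' hc' he' hAB' h1' h2'
  obtain ⟨rfl, rfl, rfl, rfl⟩ := hsys.unique hsys'
  obtain ⟨c0, c1, d0, d1, e0, e1⟩ := hfr
  obtain ⟨c0', c1', d0', d1', e0', e1'⟩ := hfr'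
  rw [dist_eq_one_iff] at hAB hAB'
  have hu : (B 0 - A 0) ^ 2 + (B 1 - A 1) ^ 2 = 1 := by linear_combination hAB
  have hu' : (B' 0 - A' 0) ^ 2 + (B' 1 - A' 1) ^ 2 = 1 := by linear_combination hAB'
  obtain ⟨f, hf⟩ := exists_frame_isometry A A' (σ := s * s')
    (by rw [mul_pow, hs, hs', one_mul]) hu hu'
  refine ⟨f, ?_, ?_, ?_, ?_, ?_⟩ <;> rw [hf]
  · exact frameMap_eq (c := 0) (t := 0) hs hu (by ring) (by ring) (by ring) (by ring)
  · exact frameMap_eq (c := 1) (t := 0) hs hu (by ring) (by ring) (by ring) (by ring)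
  · exact frameMap_eq hs hu c0 c1 c0' c1'
  · exact frameMap_eq (c := 1) (t := 2 * y) hs hu (by rw [d0]; ring) (by rw [d1]; ring) (by rw [d0']; ring)
      (by rw [d1']; ring)
  · exact frameMap_eq hs hu e0 e1 e0' e1'
end
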